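/- Let (C, δ) and (D, ∂) be S¹-complexes over a commutative ring K and let κ = (κ₀, κ₁, …) be an S¹-equivariant chain map between them such that κ₀ : (C, δ₀) → (D, ∂₀) is a quasi-isomorphism. Then for all integers m ≥ n, the induced chain map of truncated complexes κ⟨m,n⟩ : C⟨m,n⟩ → D⟨m,n⟩, given componentwise by (κ⟨m,n⟩ x)_q = ∑_{i ≥ 0, q−i ≥ n} κᵢ(x_{q−i}), is a quasi-isomorphism, i.e. induces an isomorphism H_*(C⟨m,n⟩) ≅ H_*(D⟨m,n⟩). -/

import Mathlib

open Finset DirectSum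

set_option maxHeartbeats 1000000
set_option synthInstance.maxHeartbeats 1000000

noncomputable section Lib

variable (K : Type) [CommRing K]

/-- Transport of graded components along an equality of degrees. -/
def pcast (F : ℤ → Type) [∀ n, AddCommGroup (F n)] [∀ n, Module K (F n)]
    {a b : ℤ} (h : a = b) : F a →ₗ[K] F b := by subst h; exact LinearMap.id

/-- Transport of graded components along an equality of degrees when it holds
(and the zero map otherwise). -/
def tr (F : ℤ → Type) [∀ n, AddCommGroup (F n)] [∀ n, Module K (F n)]
    (a b : ℤ) : F a →ₗ[K] F b := if h : a = b then pcast K F h else 0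

variable (C : ℤ → Type) [∀ n, AddCommGroup (C n)] [∀ n, Module K (C n)]
variable (D : ℤ → Type) [∀ n, AddCommGroup (D n)] [∀ n, Module K (D n)]
variable (E : ℤ → Type) [∀ n, AddCommGroup (E n)] [∀ n, Module K (E n)]

/-- An S¹-structure on a ℤ-graded `K`-module `C`: a sequence of operations
`δ i : Cⁿ → C^{n+1-2i}` with `∑_{i+j=k} δ i ∘ δ j = 0` for all `k ≥ 0`. -/
structure S1Struct where
  δ : (i : ℕ) → (n : ℤ) → C n →ₗ[K] C (n + 1 - 2 * (i : ℤ))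
  rel : ∀ (k : ℕ) (n : ℤ) (x : C n),
    ∑ p ∈ antidiagonal k,
      tr K C (n + 1 - 2 * (p.2 : ℤ) + 1 - 2 * (p.1 : ℤ)) (n + 2 - 2 * (k : ℤ))
        (δ p.1 (n + 1 - 2 * (p.2 : ℤ)) (δ p.2 n x)) = 0

/-- An S¹-equivariant chain map between S¹-complexes: a sequence of operations
`κ i : Cⁿ → D^{n-2i}` with `∑_{i+j=k} (κ i ∘ δ j - ∂ j ∘ κ i) = 0` for all `k ≥ 0`. -/
structure S1Map (S : S1Struct K C) (T : S1Struct K D) where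
  κ : (i : ℕ) → (n : ℤ) → C n →ₗ[K] D (n - 2 * (i : ℤ))
  rel : ∀ (k : ℕ) (n : ℤ) (x : C n),
    ∑ p ∈ antidiagonal k,
      (tr K D (n + 1 - 2 * (p.2 : ℤ) - 2 * (p.1 : ℤ)) (n + 1 - 2 * (k : ℤ))
          (κ p.1 (n + 1 - 2 * (p.2 : ℤ)) (S.δ p.2 n x))
        - tr K D (n - 2 * (p.1 : ℤ) + 1 - 2 * (p.2 : ℤ)) (n + 1 - 2 * (k : ℤ))
          (T.δ p.2 (n - 2 * (p.1 : ℤ)) (κ p.1 n x))) = 0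

/-- An S¹-equivariant chain homotopy between two S¹-equivariant chain maps: a sequence
of operations `h i : Cⁿ → D^{n-2i-1}` with
`κ k - κ' k = ∑_{i+j=k} (h i ∘ δ j + ∂ j ∘ h i)` for all `k ≥ 0`. -/
structure S1Homotopy {S : S1Struct K C} {T : S1Struct K D} (κ κ' : S1Map K C D S T) where
  h : (i : ℕ) → (n : ℤ) → C n →ₗ[K] D (n - 2 * (i : ℤ) - 1)
  rel : ∀ (k : ℕ) (n : ℤ) (x : C n),
    κ.κ k n x - κ'.κ k n x =
      ∑ p ∈ antidiagonal k,
        (tr K D (n + 1 - 2 * (p.2 : ℤ) - 2 * (p.1 : ℤ) - 1) (n - 2 * (k : ℤ))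
            (h p.1 (n + 1 - 2 * (p.2 : ℤ)) (S.δ p.2 n x))
          + tr K D (n - 2 * (p.1 : ℤ) - 1 + 1 - 2 * (p.2 : ℤ)) (n - 2 * (k : ℤ))
            (T.δ p.2 (n - 2 * (p.1 : ℤ) - 1) (h p.1 n x)))

/-- The degree `n` part of the negative cyclic complex `C⁻ = C[[u]]`:
formal power series `∑_{i ≥ 0} aᵢ uⁱ` with `aᵢ ∈ C^{n-2i}`. -/
abbrev NegCyc (n : ℤ) : Type := (i : ℕ) → C (n - 2 * (i : ℤ))

/-- The componentwise extension `(∑ uⁱ F i) (∑ aⱼ uʲ) = ∑_k (∑_{i+j=k} F i (aⱼ)) u^k`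
of a sequence of operations `F i` of degree `e - 2i` to the power series complexes. -/
def nExt (e : ℤ) (F : (i : ℕ) → (m : ℤ) → C m →ₗ[K] D (m + e - 2 * (i : ℤ))) (n t : ℤ) :
    NegCyc C n →ₗ[K] NegCyc D t where
  toFun x k := ∑ p ∈ antidiagonal k,
    tr K D (n - 2 * (p.2 : ℤ) + e - 2 * (p.1 : ℤ)) (t - 2 * (k : ℤ))
      (F p.1 (n - 2 * (p.2 : ℤ)) (x p.2))
  map_add' x y := by
    funext k
    simp [Finset.sum_add_distrib]
  map_smul' c x := by
    funext k
    simp [Finset.smul_sum]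

/-- The equivariant differential `δ^{S¹} = δ₀ + uδ₁ + u²δ₂ + ⋯` on `C⁻`. -/
def deltaNeg (S : S1Struct K C) (n : ℤ) : NegCyc C n →ₗ[K] NegCyc C (n + 1) :=
  nExt K C C 1 S.δ n (n + 1)

/-- The map `κ^{S¹} = κ₀ + uκ₁ + u²κ₂ + ⋯ : C⁻ → D⁻`. -/
def kappaNeg {S : S1Struct K C} {T : S1Struct K D} (κ : S1Map K C D S T) (n : ℤ) :
    NegCyc C n →ₗ[K] NegCyc D n :=
  nExt K C D 0 (fun i m => tr K D (m - 2 * (i : ℤ)) (m + 0 - 2 * (i : ℤ)) ∘ₗ κ.κ i m) n n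

/-- The map `H = h₀ + uh₁ + u²h₂ + ⋯ : C⁻ → D⁻[-1]`. -/
def homotopyNeg {S : S1Struct K C} {T : S1Struct K D} {κ κ' : S1Map K C D S T}
    (ht : S1Homotopy K C D κ κ') (n : ℤ) : NegCyc C n →ₗ[K] NegCyc D (n - 1) :=
  nExt K C D (-1) (fun i m => tr K D (m - 2 * (i : ℤ) - 1) (m + (-1) - 2 * (i : ℤ)) ∘ₗ ht.h i m)
    n (n - 1)

/-- The degree `n` part of the periodic complex `C^∧ = C((u))`, as a submodule of all
families `(aᵢ)_{i ∈ ℤ}` with `aᵢ ∈ C^{n-2i}`: those with `aᵢ = 0` for all sufficiently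
negative `i` (formal Laurent series). -/
def PerSub (n : ℤ) : Submodule K ((i : ℤ) → C (n - 2 * i)) where
  carrier := {x | ∃ N : ℤ, ∀ i < N, x i = 0}
  add_mem' := by
    rintro a b ⟨Na, ha⟩ ⟨Nb, hb⟩
    refine ⟨min Na Nb, fun i hi => ?_⟩
    have h1 := ha i (lt_of_lt_of_le hi (min_le_left _ _))
    have h2 := hb i (lt_of_lt_of_le hi (min_le_right _ _))
    show a i + b i = 0
    rw [h1, h2, add_zero]
  zero_mem' := ⟨0, fun _ _ => rfl⟩
  smul_mem' := by
    rintro c a ⟨N, hN⟩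
    refine ⟨N, fun i hi => ?_⟩
    show c • a i = 0
    rw [hN i hi, smul_zero]

/-- The degree `n` part of the periodic complex `C^∧ = C((u))`. -/
abbrev PerCyc (n : ℤ) : Type := ↥(PerSub K C n)

lemma natle_finite (m : ℤ) : Set.Finite {i : ℕ | (i : ℤ) ≤ m} := by
  apply Set.Finite.subset (Set.finite_Iic m.toNat)
  intro i hi
  simp only [Set.mem_setOf_eq] at hi
  simp only [Set.mem_Iic]
  omega

lemma uExt_sf (e : ℤ) (F : (i : ℕ) → (m : ℤ) → C m →ₗ[K] D (m + e - 2 * (i : ℤ))) (n t : ℤ)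
    (x : PerCyc K C n) (k : ℤ) :
    (Function.support fun i : ℕ =>
      tr K D (n - 2 * (k - (i : ℤ)) + e - 2 * (i : ℤ)) (t - 2 * k)
        (F i (n - 2 * (k - (i : ℤ))) (x.1 (k - (i : ℤ))))).Finite := by
  obtain ⟨N, hN⟩ := x.2
  apply Set.Finite.subset (natle_finite (k - N))
  intro i hi
  simp only [Function.mem_support] at hi
  simp only [Set.mem_setOf_eq]
  by_contra hcon
  push_neg at hcon
  rw [hN (k - (i : ℤ)) (by omega)] at hi
  simp at hi

/-- Componentwise extension of a sequence of operations `F i` of degree `e - 2i` to the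
Laurent series complexes: `(∑ aᵢ uⁱ) ↦ ∑_k (∑_{i≥0} F i (a_{k-i})) u^k`
(valued in the ambient product). -/
def uExtAux (e : ℤ) (F : (i : ℕ) → (m : ℤ) → C m →ₗ[K] D (m + e - 2 * (i : ℤ))) (n t : ℤ) :
    PerCyc K C n →ₗ[K] ((k : ℤ) → D (t - 2 * k)) where
  toFun x k := ∑ᶠ i : ℕ,
    tr K D (n - 2 * (k - (i : ℤ)) + e - 2 * (i : ℤ)) (t - 2 * k)
      (F i (n - 2 * (k - (i : ℤ))) (x.1 (k - (i : ℤ))))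
  map_add' x y := by
    funext k
    simp only [Pi.add_apply]
    rw [← finsum_add_distrib (uExt_sf K C D e F n t x k) (uExt_sf K C D e F n t y k)]
    apply finsum_congr
    intro i
    have hxy : (↑(x + y) : (i : ℤ) → C (n - 2 * i)) (k - (i : ℤ))
        = x.1 (k - (i : ℤ)) + y.1 (k - (i : ℤ)) := rfl
    rw [hxy, map_add, map_add]
  map_smul' c x := by
    funext k
    simp only [Pi.smul_apply, RingHom.id_apply]
    rw [smul_finsum' c (uExt_sf K C D e F n t x k)]
    apply finsum_congr
    intro i
    have hcx : (↑(c • x) : (i : ℤ) → C (n - 2 * i)) (k - (i : ℤ))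
        = c • x.1 (k - (i : ℤ)) := rfl
    rw [hcx, map_smul, map_smul]

@[simp] lemma uExtAux_apply (e : ℤ) (F : (i : ℕ) → (m : ℤ) → C m →ₗ[K] D (m + e - 2 * (i : ℤ)))
    (n t : ℤ) (x : PerCyc K C n) (k : ℤ) :
    uExtAux K C D e F n t x k = ∑ᶠ i : ℕ,
      tr K D (n - 2 * (k - (i : ℤ)) + e - 2 * (i : ℤ)) (t - 2 * k)
        (F i (n - 2 * (k - (i : ℤ))) (x.1 (k - (i : ℤ)))) := rfl

lemma uExtAux_mem (e : ℤ) (F : (i : ℕ) → (m : ℤ) → C m →ₗ[K] D (m + e - 2 * (i : ℤ)))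
    (n t : ℤ) (x : PerCyc K C n) : uExtAux K C D e F n t x ∈ PerSub K D t := by
  obtain ⟨N, hN⟩ := x.2
  refine ⟨N, fun k hk => ?_⟩
  rw [uExtAux_apply]
  apply finsum_eq_zero_of_forall_eq_zero
  intro i
  rw [hN (k - (i : ℤ)) (by omega)]
  simp

/-- Componentwise extension of a sequence of operations `F i` of degree `e - 2i` to the
complexes of formal Laurent series. -/
def uExt (e : ℤ) (F : (i : ℕ) → (m : ℤ) → C m →ₗ[K] D (m + e - 2 * (i : ℤ))) (n t : ℤ) :
    PerCyc K C n →ₗ[K] PerCyc K D t :=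
  LinearMap.codRestrict (PerSub K D t) (uExtAux K C D e F n t) (uExtAux_mem K C D e F n t)

@[simp] lemma uExt_coe_apply (e : ℤ) (F : (i : ℕ) → (m : ℤ) → C m →ₗ[K] D (m + e - 2 * (i : ℤ)))
    (n t : ℤ) (x : PerCyc K C n) (k : ℤ) :
    (uExt K C D e F n t x).1 k = ∑ᶠ i : ℕ,
      tr K D (n - 2 * (k - (i : ℤ)) + e - 2 * (i : ℤ)) (t - 2 * k)
        (F i (n - 2 * (k - (i : ℤ))) (x.1 (k - (i : ℤ)))) := rfl

/-- The equivariant differential `δ^{S¹} = δ₀ + uδ₁ + u²δ₂ + ⋯` on `C^∧ = C((u))`. -/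
def deltaPer (S : S1Struct K C) (n : ℤ) : PerCyc K C n →ₗ[K] PerCyc K C (n + 1) :=
  uExt K C C 1 S.δ n (n + 1)

/-- The map `κ^{S¹} = κ₀ + uκ₁ + u²κ₂ + ⋯ : C^∧ → D^∧`. -/
def kappaPer {S : S1Struct K C} {T : S1Struct K D} (κ : S1Map K C D S T) (n : ℤ) :
    PerCyc K C n →ₗ[K] PerCyc K D n :=
  uExt K C D 0 (fun i m => tr K D (m - 2 * (i : ℤ)) (m + 0 - 2 * (i : ℤ)) ∘ₗ κ.κ i m) n n

/-- The map `H = h₀ + uh₁ + u²h₂ + ⋯ : C^∧ → D^∧[-1]`. -/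
def homotopyPer {S : S1Struct K C} {T : S1Struct K D} {κ κ' : S1Map K C D S T}
    (ht : S1Homotopy K C D κ κ') (n : ℤ) : PerCyc K C n →ₗ[K] PerCyc K D (n - 1) :=
  uExt K C D (-1) (fun i m => tr K D (m - 2 * (i : ℤ) - 1) (m + (-1) - 2 * (i : ℤ)) ∘ₗ ht.h i m)
    n (n - 1)

/-- The submodule `u^m C⁻ ⊆ C^∧` of Laurent series supported in powers `≥ m`. -/
def uPow (m : ℤ) (n : ℤ) : Submodule K (PerCyc K C n) where
  carrier := {x | ∀ i < m, x.1 i = 0}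
  add_mem' := by
    intro a b ha hb i hi
    show a.1 i + b.1 i = 0
    rw [ha i hi, hb i hi, add_zero]
  zero_mem' := fun _ _ => rfl
  smul_mem' := by
    intro c a ha i hi
    show c • a.1 i = 0
    rw [ha i hi, smul_zero]

lemma uExt_mem_uPow (e : ℤ) (F : (i : ℕ) → (m : ℤ) → C m →ₗ[K] D (m + e - 2 * (i : ℤ)))
    (n t : ℤ) (m : ℤ) (x : PerCyc K C n) (hx : x ∈ uPow K C m n) :
    uExt K C D e F n t x ∈ uPow K D m t := by
  intro k hk
  rw [uExt_coe_apply]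
  apply finsum_eq_zero_of_forall_eq_zero
  intro i
  rw [hx (k - (i : ℤ)) (by omega)]
  simp

/-- The restriction of `δ^{S¹}` to the subcomplex `u^m C⁻ ⊆ C^∧`. -/
def deltaRes (S : S1Struct K C) (m n : ℤ) : ↥(uPow K C m n) →ₗ[K] ↥(uPow K C m (n + 1)) :=
  (deltaPer K C S n).restrict (fun x hx => uExt_mem_uPow K C C 1 S.δ n (n + 1) m x hx)

/-- The restriction of `κ^{S¹}` to the subcomplexes `u^m C⁻ → u^m D⁻`. -/
def kappaRes {S : S1Struct K C} {T : S1Struct K D} (κ : S1Map K C D S T) (m n : ℤ) :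
    ↥(uPow K C m n) →ₗ[K] ↥(uPow K D m n) :=
  (kappaPer K C D κ n).restrict
    (fun x hx => uExt_mem_uPow K C D 0
      (fun i m => tr K D (m - 2 * (i : ℤ)) (m + 0 - 2 * (i : ℤ)) ∘ₗ κ.κ i m) n n m x hx)

/-- The degree `n` part of the quotient complex `C⁺ = C^∧ / uC⁻`. -/
abbrev QtC (n : ℤ) : Type := PerCyc K C n ⧸ uPow K C 1 n

/-- The operator on `C⁺ = C^∧/uC⁻` induced by `δ^{S¹}`. -/
def deltaPlus (S : S1Struct K C) (n : ℤ) : QtC K C n →ₗ[K] QtC K C (n + 1) :=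
  Submodule.mapQ _ _ (deltaPer K C S n)
    (fun x hx => uExt_mem_uPow K C C 1 S.δ n (n + 1) 1 x hx)

/-- The map `C⁺ → D⁺` induced by `κ^{S¹}`. -/
def kappaPlus {S : S1Struct K C} {T : S1Struct K D} (κ : S1Map K C D S T) (n : ℤ) :
    QtC K C n →ₗ[K] QtC K D n :=
  Submodule.mapQ _ _ (kappaPer K C D κ n)
    (fun x hx => uExt_mem_uPow K C D 0
      (fun i m => tr K D (m - 2 * (i : ℤ)) (m + 0 - 2 * (i : ℤ)) ∘ₗ κ.κ i m) n n 1 x hx)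

/-- The map `C⁺ → D⁺[-1]` induced by an S¹-equivariant chain homotopy. -/
def homotopyPlus {S : S1Struct K C} {T : S1Struct K D} {κ κ' : S1Map K C D S T}
    (ht : S1Homotopy K C D κ κ') (n : ℤ) : QtC K C n →ₗ[K] QtC K D (n - 1) :=
  Submodule.mapQ _ _ (homotopyPer K C D ht n)
    (fun x hx => uExt_mem_uPow K C D (-1)
      (fun i m => tr K D (m - 2 * (i : ℤ) - 1) (m + (-1) - 2 * (i : ℤ)) ∘ₗ ht.h i m)
      n (n - 1) 1 x hx)

/-- The homology in degree `n` of a cochain complex of `K`-modules given degreewise by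
`d n : F n → F (n+1)`: the kernel of `d n` modulo the image of `d (n-1)`. -/
abbrev HomologyOf (F : ℤ → Type) [∀ n, AddCommGroup (F n)] [∀ n, Module K (F n)]
    (d : (n : ℤ) → F n →ₗ[K] F (n + 1)) (n : ℤ) : Type :=
  ↥(LinearMap.ker (d n)) ⧸
    Submodule.comap (LinearMap.ker (d n)).subtype
      (LinearMap.range (pcast K F (show n - 1 + 1 = n by ring) ∘ₗ d (n - 1)))

/-- A chain map `f` between cochain complexes `(F, dF)` and `(G, dG)` induces an isomorphism
on homology in every degree: for every `n` there is a bijective linear map between the homology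
groups sending the class of a cycle `x` to the class of the cycle `f n x`. -/
def InducesIso (F : ℤ → Type) [∀ n, AddCommGroup (F n)] [∀ n, Module K (F n)]
    (G : ℤ → Type) [∀ n, AddCommGroup (G n)] [∀ n, Module K (G n)]
    (dF : (n : ℤ) → F n →ₗ[K] F (n + 1)) (dG : (n : ℤ) → G n →ₗ[K] G (n + 1))
    (f : (n : ℤ) → F n →ₗ[K] G n) : Prop :=
  ∀ n : ℤ, ∃ φ : HomologyOf K F dF n →ₗ[K] HomologyOf K G dG n,
    Function.Bijective φ ∧
    ∀ (x : F n) (hx : x ∈ LinearMap.ker (dF n)) (hy : f n x ∈ LinearMap.ker (dG n)),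
      φ (Submodule.Quotient.mk ⟨x, hx⟩) = Submodule.Quotient.mk ⟨f n x, hy⟩

/-- The differential `δ₀` of an S¹-complex, as a degree `+1` operator. -/
def d0 (S : S1Struct K C) (n : ℤ) : C n →ₗ[K] C (n + 1) :=
  tr K C (n + 1 - 2 * ((0 : ℕ) : ℤ)) (n + 1) ∘ₗ S.δ 0 n

/-- The leading term `κ₀` of an S¹-equivariant chain map, as a degree `0` operator. -/
def k0 {S : S1Struct K C} {T : S1Struct K D} (κ : S1Map K C D S T) (n : ℤ) :
    C n →ₗ[K] D n :=
  tr K D (n - 2 * ((0 : ℕ) : ℤ)) n ∘ₗ κ.κ 0 n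

/-- The degree `d` part of the truncated complex `C⟨m,n⟩ = uⁿC⁻/u^mC⁻`: families
`(a_p)_{n ≤ p ≤ m-1}` with `a_p ∈ C^{d-2p}`, realized as families over `ℤ`
vanishing outside `[n, m-1]`. -/
def truncSub (m n d : ℤ) : Submodule K ((p : ℤ) → C (d - 2 * p)) where
  carrier := {a | ∀ p : ℤ, (p < n ∨ m ≤ p) → a p = 0}
  add_mem' := by
    intro a b ha hb p hp
    show a p + b p = 0
    rw [ha p hp, hb p hp, add_zero]
  zero_mem' := fun _ _ => rfl
  smul_mem' := by
    intro c a ha p hp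
    show c • a p = 0
    rw [ha p hp, smul_zero]

/-- The differential of the truncated complex `C⟨m,n⟩`, with components
`(δ^{S¹}x)_q = ∑_{i ≥ 0, q-i ≥ n} δᵢ(x_{q-i})` for `n ≤ q ≤ m-1`
(valued in the ambient product). -/
def truncDAux (S : S1Struct K C) (m n d : ℤ) :
    ↥(truncSub K C m n d) →ₗ[K] ((q : ℤ) → C (d + 1 - 2 * q)) where
  toFun x q :=
    if n ≤ q ∧ q < m then
      ∑ i ∈ Finset.range ((q - n).toNat + 1),
        tr K C (d - 2 * (q - (i : ℤ)) + 1 - 2 * (i : ℤ)) (d + 1 - 2 * q)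
          (S.δ i (d - 2 * (q - (i : ℤ))) (x.1 (q - (i : ℤ))))
    else 0
  map_add' x y := by
    funext q
    by_cases h : n ≤ q ∧ q < m
    · simp only [Pi.add_apply, if_pos h]
      rw [← Finset.sum_add_distrib]
      apply Finset.sum_congr rfl
      intro i _
      have hxy : (↑(x + y) : (p : ℤ) → C (d - 2 * p)) (q - (i : ℤ))
          = x.1 (q - (i : ℤ)) + y.1 (q - (i : ℤ)) := rfl
      rw [hxy, map_add, map_add]
    · simp only [Pi.add_apply, if_neg h, add_zero]
  map_smul' c x := by
    funext q
    by_cases h : n ≤ q ∧ q < m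
    · simp only [Pi.smul_apply, RingHom.id_apply, if_pos h]
      rw [Finset.smul_sum]
      apply Finset.sum_congr rfl
      intro i _
      have hcx : (↑(c • x) : (p : ℤ) → C (d - 2 * p)) (q - (i : ℤ))
          = c • x.1 (q - (i : ℤ)) := rfl
      rw [hcx, map_smul, map_smul]
    · simp only [Pi.smul_apply, RingHom.id_apply, if_neg h, smul_zero]

@[simp] lemma truncDAux_apply (S : S1Struct K C) (m n d : ℤ) (x : ↥(truncSub K C m n d))
    (q : ℤ) : truncDAux K C S m n d x q =
    if n ≤ q ∧ q < m then
      ∑ i ∈ Finset.range ((q - n).toNat + 1),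
        tr K C (d - 2 * (q - (i : ℤ)) + 1 - 2 * (i : ℤ)) (d + 1 - 2 * q)
          (S.δ i (d - 2 * (q - (i : ℤ))) (x.1 (q - (i : ℤ))))
    else 0 := rfl

lemma truncDAux_mem (S : S1Struct K C) (m n d : ℤ) (x : ↥(truncSub K C m n d)) :
    truncDAux K C S m n d x ∈ truncSub K C m n (d + 1) := by
  intro q hq
  rw [truncDAux_apply, if_neg (by omega)]

/-- The differential of the truncated complex `C⟨m,n⟩ = uⁿC⁻/u^mC⁻`. -/
def truncD (S : S1Struct K C) (m n d : ℤ) :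
    ↥(truncSub K C m n d) →ₗ[K] ↥(truncSub K C m n (d + 1)) :=
  LinearMap.codRestrict _ (truncDAux K C S m n d) (truncDAux_mem K C S m n d)

/-- The chain map `κ⟨m,n⟩ : C⟨m,n⟩ → D⟨m,n⟩` induced by an S¹-equivariant chain map,
with components `(κ⟨m,n⟩x)_q = ∑_{i ≥ 0, q-i ≥ n} κᵢ(x_{q-i})`
(valued in the ambient product). -/
def truncKAux {S : S1Struct K C} {T : S1Struct K D} (κ : S1Map K C D S T) (m n d : ℤ) :
    ↥(truncSub K C m n d) →ₗ[K] ((q : ℤ) → D (d - 2 * q)) where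
  toFun x q :=
    if n ≤ q ∧ q < m then
      ∑ i ∈ Finset.range ((q - n).toNat + 1),
        tr K D (d - 2 * (q - (i : ℤ)) - 2 * (i : ℤ)) (d - 2 * q)
          (κ.κ i (d - 2 * (q - (i : ℤ))) (x.1 (q - (i : ℤ))))
    else 0
  map_add' x y := by
    funext q
    by_cases h : n ≤ q ∧ q < m
    · simp only [Pi.add_apply, if_pos h]
      rw [← Finset.sum_add_distrib]
      apply Finset.sum_congr rfl
      intro i _
      have hxy : (↑(x + y) : (p : ℤ) → C (d - 2 * p)) (q - (i : ℤ))
          = x.1 (q - (i : ℤ)) + y.1 (q - (i : ℤ)) := rfl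
      rw [hxy, map_add, map_add]
    · simp only [Pi.add_apply, if_neg h, add_zero]
  map_smul' c x := by
    funext q
    by_cases h : n ≤ q ∧ q < m
    · simp only [Pi.smul_apply, RingHom.id_apply, if_pos h]
      rw [Finset.smul_sum]
      apply Finset.sum_congr rfl
      intro i _
      have hcx : (↑(c • x) : (p : ℤ) → C (d - 2 * p)) (q - (i : ℤ))
          = c • x.1 (q - (i : ℤ)) := rfl
      rw [hcx, map_smul, map_smul]
    · simp only [Pi.smul_apply, RingHom.id_apply, if_neg h, smul_zero]

lemma truncKAux_mem {S : S1Struct K C} {T : S1Struct K D} (κ : S1Map K C D S T)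
    (m n d : ℤ) (x : ↥(truncSub K C m n d)) :
    truncKAux K C D κ m n d x ∈ truncSub K D m n d := by
  intro q hq
  show (if n ≤ q ∧ q < m then _ else 0) = 0
  rw [if_neg (by omega)]

/-- The chain map `κ⟨m,n⟩ : C⟨m,n⟩ → D⟨m,n⟩` induced by an S¹-equivariant chain map. -/
def truncK {S : S1Struct K C} {T : S1Struct K D} (κ : S1Map K C D S T) (m n d : ℤ) :
    ↥(truncSub K C m n d) →ₗ[K] ↥(truncSub K D m n d) :=
  LinearMap.codRestrict _ (truncKAux K C D κ m n d) (truncKAux_mem K C D κ m n d)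

end Lib

section Aux

variable (K : Type) [CommRing K]

def AcycCone (F : ℤ → Type) [∀ n, AddCommGroup (F n)] [∀ n, Module K (F n)]
    (G : ℤ → Type) [∀ n, AddCommGroup (G n)] [∀ n, Module K (G n)]
    (dF : (n : ℤ) → F n →ₗ[K] F (n + 1)) (dG : (n : ℤ) → G n →ₗ[K] G (n + 1))
    (f : (n : ℤ) → F n →ₗ[K] G n) : Prop :=
  ∀ (k : ℤ) (x : F (k + 1 + 1)) (y : G (k + 1)), dF (k + 1 + 1) x = 0 →
    f (k + 1 + 1) x = dG (k + 1) y →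
    ∃ (x' : F (k + 1)) (y' : G k), dF (k + 1) x' = x ∧ y = f (k + 1) x' + dG k y'

lemma range_pcast (F : ℤ → Type) [∀ n, AddCommGroup (F n)] [∀ n, Module K (F n)]
    (dF : (n : ℤ) → F n →ₗ[K] F (n + 1)) (j k : ℤ) (h : j = k) (h2 : j + 1 = k + 1) :
    LinearMap.range (pcast K F h2 ∘ₗ dF j) = LinearMap.range (dF k) := by
  subst h
  rfl

lemma mk_eq_iff (F : ℤ → Type) [∀ n, AddCommGroup (F n)] [∀ n, Module K (F n)]
    (dF : (n : ℤ) → F n →ₗ[K] F (n + 1)) (k : ℤ) (x y : LinearMap.ker (dF (k + 1))) :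
    (Submodule.Quotient.mk x : HomologyOf K F dF (k + 1)) = Submodule.Quotient.mk y ↔
      ∃ z : F k, dF k z = x.1 - y.1 := by
  rw [Submodule.Quotient.eq, Submodule.mem_comap,
    range_pcast K F dF (k + 1 - 1) k (by ring)]
  rfl

section Cone

variable (F : ℤ → Type) [∀ n, AddCommGroup (F n)] [∀ n, Module K (F n)]
    (G : ℤ → Type) [∀ n, AddCommGroup (G n)] [∀ n, Module K (G n)]
    (dF : (n : ℤ) → F n →ₗ[K] F (n + 1)) (dG : (n : ℤ) → G n →ₗ[K] G (n + 1))
    (f : (n : ℤ) → F n →ₗ[K] G n)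

lemma acyc_of_iso (hf : ∀ n x, f (n + 1) (dF n x) = dG n (f n x))
    (h : InducesIso K F G dF dG f) : AcycCone K F G dF dG f := by
  intro k x y hx hxy
  have hker : ∀ n (x : F n), dF n x = 0 → f n x ∈ LinearMap.ker (dG n) := by
    intro n x hx
    rw [LinearMap.mem_ker, ← hf, hx, map_zero]
  obtain ⟨φ, hφ, hc⟩ := h (k + 1 + 1)
  have h1 := hc x hx (hker _ x hx)
  have h2 : (Submodule.Quotient.mk ⟨f _ x, hker _ x hx⟩ : HomologyOf K G dG (k + 1 + 1))
      = Submodule.Quotient.mk 0 := by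
    rw [mk_eq_iff]
    exact ⟨y, by simp [hxy]⟩
  rw [h2, Submodule.Quotient.mk_zero, ← map_zero φ] at h1
  have h3 := hφ.1 h1
  rw [← Submodule.Quotient.mk_zero, mk_eq_iff] at h3
  obtain ⟨x1, hx1⟩ := h3
  have hx1' : dF (k + 1) x1 = x := by simpa using hx1
  obtain ⟨ψ, hψ, hd⟩ := h (k + 1)
  have hcl : y - f (k + 1) x1 ∈ LinearMap.ker (dG (k + 1)) := by
    rw [LinearMap.mem_ker, map_sub, ← hf, hx1', hxy, sub_self]
  obtain ⟨w, hw⟩ := hψ.2 (Submodule.Quotient.mk ⟨_, hcl⟩)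
  obtain ⟨⟨z, hz⟩, rfl⟩ := Submodule.Quotient.mk_surjective _ w
  rw [hd z hz (hker _ z hz)] at hw
  have hw' := hw.symm
  rw [mk_eq_iff] at hw'
  obtain ⟨y', hy'⟩ := hw'
  refine ⟨x1 + z, y', ?_, ?_⟩
  · rw [map_add, hx1', LinearMap.mem_ker.1 hz, add_zero]
  · rw [hy', map_add]
    simp only
    abel

lemma iso_of_acyc (hf : ∀ n x, f (n + 1) (dF n x) = dG n (f n x))
    (h : AcycCone K F G dF dG f) : InducesIso K F G dF dG f := by
  intro n
  obtain ⟨k, rfl⟩ : ∃ k, n = k + 1 := ⟨n - 1, by ring⟩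
  obtain ⟨k, rfl⟩ : ∃ j, k = j + 1 := ⟨k - 1, by ring⟩
  have hker : ∀ n (x : F n), x ∈ LinearMap.ker (dF n) → f n x ∈ LinearMap.ker (dG n) := by
    intro n x hx
    rw [LinearMap.mem_ker, ← hf, LinearMap.mem_ker.1 hx, map_zero]
  refine ⟨Submodule.mapQ _ _ ((f (k + 1 + 1)).restrict (hker _)) ?_, ⟨?_, ?_⟩, ?_⟩
  · intro x hx
    rw [Submodule.mem_comap, range_pcast K F dF (k + 1 + 1 - 1) (k + 1) (by ring)] at hx
    rw [Submodule.mem_comap, Submodule.mem_comap,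
      range_pcast K G dG (k + 1 + 1 - 1) (k + 1) (by ring)]
    obtain ⟨z, hz⟩ := hx
    refine ⟨f _ z, ?_⟩
    rw [← hf, hz]
    rfl
  · rw [injective_iff_map_eq_zero]
    intro w hw
    obtain ⟨⟨x, hx⟩, rfl⟩ := Submodule.Quotient.mk_surjective _ w
    rw [Submodule.mapQ_apply, ← Submodule.Quotient.mk_zero, mk_eq_iff] at hw
    obtain ⟨y, hy⟩ := hw
    obtain ⟨x', y', h1, h2⟩ := h k x y hx (by rw [hy]; simp)
    rw [← Submodule.Quotient.mk_zero, mk_eq_iff]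
    exact ⟨x', by simpa using h1⟩
  · intro w
    obtain ⟨⟨y, hy⟩, rfl⟩ := Submodule.Quotient.mk_surjective _ w
    obtain ⟨x', y', h1, h2⟩ := h (k + 1) 0 y (map_zero _)
      (by rw [map_zero]; exact (LinearMap.mem_ker.1 hy).symm)
    refine ⟨Submodule.Quotient.mk ⟨x', h1⟩, ?_⟩
    rw [Submodule.mapQ_apply]
    symm
    rw [mk_eq_iff]
    refine ⟨y', ?_⟩
    simp [h2]
  · intro x hx hy
    rfl

end Cone

variable (C : ℤ → Type) [∀ n, AddCommGroup (C n)] [∀ n, Module K (C n)]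
variable (D : ℤ → Type) [∀ n, AddCommGroup (D n)] [∀ n, Module K (D n)]

variable {C} in
noncomputable def dd (S : S1Struct K C) (i : ℕ) (a b : ℤ) : C a →ₗ[K] C b :=
  tr K C _ b ∘ₗ S.δ i a

variable {C D} in
noncomputable def kk {S : S1Struct K C} {T : S1Struct K D} (κ : S1Map K C D S T) (i : ℕ)
    (a b : ℤ) : C a →ₗ[K] D b :=
  tr K D _ b ∘ₗ κ.κ i a

lemma tr_self (a : ℤ) (x : C a) : tr K C a a x = x := by
  unfold tr pcast
  simp

lemma dd_self (S : S1Struct K C) (i : ℕ) (a : ℤ) (x : C a) :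
    dd K S i a (a + 1 - 2 * (i : ℤ)) x = S.δ i a x := tr_self K C _ _

lemma kk_self {S : S1Struct K C} {T : S1Struct K D} (κ : S1Map K C D S T) (i : ℕ) (a : ℤ)
    (x : C a) : kk K κ i a (a - 2 * (i : ℤ)) x = κ.κ i a x := tr_self K D _ _

lemma sum_Icc_anti {M : Type} [AddCommMonoid M] (f : ℕ → ℕ → M) (p : ℤ) (k : ℕ) :
    ∑ r ∈ Finset.Icc p (p + k), f (p + k - r).toNat (r - p).toNat
      = ∑ s ∈ antidiagonal k, f s.1 s.2 := by
  refine Finset.sum_bij' (fun r _ => ((p + k - r).toNat, (r - p).toNat))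
    (fun s _ => p + (s.2 : ℤ)) ?_ ?_ ?_ ?_ ?_
  · intro r hr
    simp only [Finset.mem_Icc] at hr
    simp only [Finset.HasAntidiagonal.mem_antidiagonal]
    omega
  · rintro ⟨s, t⟩ hs
    simp only [Finset.HasAntidiagonal.mem_antidiagonal] at hs
    simp only [Finset.mem_Icc]
    omega
  · intro r hr
    simp only [Finset.mem_Icc] at hr
    simp only
    omega
  · rintro ⟨s, t⟩ hs
    simp only [Finset.HasAntidiagonal.mem_antidiagonal] at hs
    simp only [Prod.mk.injEq]
    omega
  · intro r hr
    rfl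

lemma dd_rel (S : S1Struct K C) (a c p q : ℤ) (hpq : p ≤ q) (b : ℤ → ℤ)
    (hb : ∀ r, b r = a + 1 - 2 * (r - p)) (hc : c = a + 2 - 2 * (q - p)) (x : C a) :
    ∑ r ∈ Finset.Icc p q, dd K S (q - r).toNat (b r) c (dd K S (r - p).toNat a (b r) x) = 0 := by
  obtain ⟨k, rfl⟩ : ∃ k : ℕ, q = p + k := ⟨(q - p).toNat, by omega⟩
  obtain rfl : c = a + 2 - 2 * (k : ℤ) := by rw [hc]; ring
  rw [← S.rel k a x, ← sum_Icc_anti (fun i j => tr K C (a + 1 - 2 * (j : ℤ) + 1 - 2 * (i : ℤ)) (a + 2 - 2 * (k : ℤ))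
        (S.δ i (a + 1 - 2 * (j : ℤ)) (S.δ j a x))) p k]
  apply Finset.sum_congr rfl
  intro r hr
  simp only [Finset.mem_Icc] at hr
  have : b r = a + 1 - 2 * ((r - p).toNat : ℤ) := by rw [hb]; omega
  rw [this, dd_self]
  rfl

lemma kk_rel {S : S1Struct K C} {T : S1Struct K D} (κ : S1Map K C D S T)
    (a c p q : ℤ) (hpq : p ≤ q) (b b' : ℤ → ℤ)
    (hb : ∀ r, b r = a + 1 - 2 * (r - p)) (hb' : ∀ r, b' r = a - 2 * (r - p))
    (hc : c = a + 1 - 2 * (q - p)) (x : C a) :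
    ∑ r ∈ Finset.Icc p q, kk K κ (q - r).toNat (b r) c (dd K S (r - p).toNat a (b r) x) =
    ∑ r ∈ Finset.Icc p q, dd K T (q - r).toNat (b' r) c (kk K κ (r - p).toNat a (b' r) x) := by
  obtain ⟨k, rfl⟩ : ∃ k : ℕ, q = p + k := ⟨(q - p).toNat, by omega⟩
  obtain rfl : c = a + 1 - 2 * (k : ℤ) := by rw [hc]; ring
  have h := κ.rel k a x
  rw [Finset.sum_sub_distrib, sub_eq_zero] at h
  rw [← sum_Icc_anti (fun i j => tr K D (a + 1 - 2 * (j : ℤ) - 2 * (i : ℤ)) (a + 1 - 2 * (k : ℤ))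
          (κ.κ i (a + 1 - 2 * (j : ℤ)) (S.δ j a x))) p k,
    ← Finset.Nat.sum_antidiagonal_swap] at h
  simp only [Prod.fst_swap, Prod.snd_swap] at h
  rw [← sum_Icc_anti (fun j i => tr K D (a - 2 * (i : ℤ) + 1 - 2 * (j : ℤ)) (a + 1 - 2 * (k : ℤ))
          (T.δ j (a - 2 * (i : ℤ)) (κ.κ i a x))) p k] at h
  convert h using 1
  · apply Finset.sum_congr rfl
    intro r hr
    simp only [Finset.mem_Icc] at hr
    have : b r = a + 1 - 2 * ((r - p).toNat : ℤ) := by rw [hb]; omega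
    rw [this, dd_self]
    rfl
  · apply Finset.sum_congr rfl
    intro r hr
    simp only [Finset.mem_Icc] at hr
    have : b' r = a - 2 * ((r - p).toNat : ℤ) := by rw [hb']; omega
    rw [this, kk_self]
    rfl

lemma sum_range_Icc {M : Type} [AddCommMonoid M] (n q : ℤ) (h : n ≤ q) (f : ℕ → ℤ → M) :
    ∑ i ∈ Finset.range ((q - n).toNat + 1), f i (q - (i : ℤ))
      = ∑ p ∈ Finset.Icc n q, f (q - p).toNat p := by
  refine Finset.sum_bij' (fun i _ => q - (i : ℤ)) (fun p _ => (q - p).toNat) ?_ ?_ ?_ ?_ ?_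
  · intro i hi
    simp only [Finset.mem_range] at hi
    simp only [Finset.mem_Icc]
    omega
  · intro i hi
    simp only [Finset.mem_Icc] at hi
    simp only [Finset.mem_range]
    omega
  · intro i hi
    simp
  · intro i hi
    simp only [Finset.mem_Icc] at hi
    omega
  · intro i hi
    simp

lemma truncD_val (S : S1Struct K C) (m n d : ℤ) (x : truncSub K C m n d) (q : ℤ)
    (hq : n ≤ q) (hq' : q < m) :
    (truncD K C S m n d x).1 q =
      ∑ p ∈ Finset.Icc n q, dd K S (q - p).toNat (d - 2 * p) (d + 1 - 2 * q) (x.1 p) := by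
  rw [← sum_range_Icc n q hq (fun i p => dd K S i (d - 2 * p) (d + 1 - 2 * q) (x.1 p))]
  show truncDAux K C S m n d x q = _
  rw [truncDAux_apply, if_pos ⟨hq, hq'⟩]
  rfl

lemma truncK_val {S : S1Struct K C} {T : S1Struct K D} (κ : S1Map K C D S T) (m n d : ℤ)
    (x : truncSub K C m n d) (q : ℤ) (hq : n ≤ q) (hq' : q < m) :
    (truncK K C D κ m n d x).1 q =
      ∑ p ∈ Finset.Icc n q, kk K κ (q - p).toNat (d - 2 * p) (d - 2 * q) (x.1 p) := by
  rw [← sum_range_Icc n q hq (fun i p => kk K κ i (d - 2 * p) (d - 2 * q) (x.1 p))]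
  show (if n ≤ q ∧ q < m then _ else 0) = _
  rw [if_pos ⟨hq, hq'⟩]
  rfl

lemma trunc_ext (m n d : ℤ) (x y : truncSub K C m n d)
    (h : ∀ q, n ≤ q → q < m → x.1 q = y.1 q) : x = y := by
  apply Subtype.ext
  funext q
  by_cases hq : n ≤ q ∧ q < m
  · exact h q hq.1 hq.2
  · rw [x.2 q (by omega), y.2 q (by omega)]

lemma sum_tri {M : Type} [AddCommMonoid M] (n q : ℤ) (f : ℤ → ℤ → M) :
    ∑ r ∈ Finset.Icc n q, ∑ p ∈ Finset.Icc n r, f r p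
      = ∑ p ∈ Finset.Icc n q, ∑ r ∈ Finset.Icc p q, f r p := by
  apply Finset.sum_comm'
  intro x y
  simp only [Finset.mem_Icc]
  omega

lemma truncD_sq (S : S1Struct K C) (m n d : ℤ) (x : truncSub K C m n d) :
    truncD K C S m n (d + 1) (truncD K C S m n d x) = 0 := by
  apply trunc_ext
  intro q hq hq'
  rw [truncD_val K C S m n _ _ q hq hq']
  have : ∀ r ∈ Finset.Icc n q, dd K S (q - r).toNat (d + 1 - 2 * r) (d + 1 + 1 - 2 * q)
      ((truncD K C S m n d x).1 r) = ∑ p ∈ Finset.Icc n r,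
        dd K S (q - r).toNat (d + 1 - 2 * r) (d + 1 + 1 - 2 * q)
          (dd K S (r - p).toNat (d - 2 * p) (d + 1 - 2 * r) (x.1 p)) := by
    intro r hr
    rw [Finset.mem_Icc] at hr
    rw [truncD_val K C S m n _ _ r hr.1 (by omega), map_sum]
  rw [Finset.sum_congr rfl this, sum_tri]
  apply Finset.sum_eq_zero
  intro p hp
  rw [Finset.mem_Icc] at hp
  exact dd_rel K C S (d - 2 * p) _ p q hp.2 (fun r => d + 1 - 2 * r) (fun r => by ring)
    (by ring) (x.1 p)

lemma truncK_chain {S : S1Struct K C} {T : S1Struct K D} (κ : S1Map K C D S T) (m n d : ℤ)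
    (x : truncSub K C m n d) :
    truncK K C D κ m n (d + 1) (truncD K C S m n d x)
      = truncD K D T m n d (truncK K C D κ m n d x) := by
  apply trunc_ext
  intro q hq hq'
  rw [truncK_val K C D κ m n _ _ q hq hq', truncD_val K D T m n _ _ q hq hq']
  have h1 : ∀ r ∈ Finset.Icc n q, kk K κ (q - r).toNat (d + 1 - 2 * r) (d + 1 - 2 * q)
      ((truncD K C S m n d x).1 r) = ∑ p ∈ Finset.Icc n r,
        kk K κ (q - r).toNat (d + 1 - 2 * r) (d + 1 - 2 * q)
          (dd K S (r - p).toNat (d - 2 * p) (d + 1 - 2 * r) (x.1 p)) := by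
    intro r hr
    rw [Finset.mem_Icc] at hr
    rw [truncD_val K C S m n _ _ r hr.1 (by omega), map_sum]
  have h2 : ∀ r ∈ Finset.Icc n q, dd K T (q - r).toNat (d - 2 * r) (d + 1 - 2 * q)
      ((truncK K C D κ m n d x).1 r) = ∑ p ∈ Finset.Icc n r,
        dd K T (q - r).toNat (d - 2 * r) (d + 1 - 2 * q)
          (kk K κ (r - p).toNat (d - 2 * p) (d - 2 * r) (x.1 p)) := by
    intro r hr
    rw [Finset.mem_Icc] at hr
    rw [truncK_val K C D κ m n _ _ r hr.1 (by omega), map_sum]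
  rw [Finset.sum_congr rfl h1, Finset.sum_congr rfl h2, sum_tri, sum_tri]
  apply Finset.sum_congr rfl
  intro p hp
  rw [Finset.mem_Icc] at hp
  exact kk_rel K C D κ (d - 2 * p) _ p q hp.2 (fun r => d + 1 - 2 * r) (fun r => d - 2 * r)
    (fun r => by ring) (fun r => by ring) (by ring) (x.1 p)

lemma k0_chain {S : S1Struct K C} {T : S1Struct K D} (κ : S1Map K C D S T) (n : ℤ) (x : C n) :
    k0 K C D κ (n + 1) (d0 K C S n x) = d0 K D T n (k0 K C D κ n x) := by
  have := kk_rel K C D κ n (n + 1) 0 0 le_rfl (fun r => n + 1 - 2 * r) (fun r => n - 2 * r)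
    (fun r => by ring) (fun r => by ring) (by ring) x
  simp only [Finset.Icc_self, Finset.sum_singleton, sub_self, Int.toNat_zero] at this
  rw [show n + 1 - 2 * 0 = n + 1 by ring, show n - 2 * 0 = n by ring] at this
  exact this

/-- Lowest component of the operators on series supported in `[q, m-1]`. -/
lemma truncD_low (S : S1Struct K C) (m n d : ℤ) (x : truncSub K C m n d) (q : ℤ)
    (hx : ∀ p < q, x.1 p = 0) :
    (∀ p < q, (truncD K C S m n d x).1 p = 0) ∧ (n ≤ q → q < m →
      (truncD K C S m n d x).1 q = dd K S 0 (d - 2 * q) (d + 1 - 2 * q) (x.1 q)) := by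
  constructor
  · intro p hp
    by_cases h : n ≤ p ∧ p < m
    · rw [truncD_val K C S m n d x p h.1 h.2]
      apply Finset.sum_eq_zero
      intro r hr
      rw [Finset.mem_Icc] at hr
      rw [hx r (by omega), map_zero]
    · exact (truncD K C S m n d x).2 p (by omega)
  · intro h1 h2
    rw [truncD_val K C S m n d x q h1 h2, Finset.sum_eq_single q]
    · simp
    · intro r hr hne
      rw [Finset.mem_Icc] at hr
      rw [hx r (by omega), map_zero]
    · intro h
      simp at h
      omega

lemma truncK_low {S : S1Struct K C} {T : S1Struct K D} (κ : S1Map K C D S T) (m n d : ℤ)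
    (x : truncSub K C m n d) (q : ℤ) (hx : ∀ p < q, x.1 p = 0) :
    (∀ p < q, (truncK K C D κ m n d x).1 p = 0) ∧ (n ≤ q → q < m →
      (truncK K C D κ m n d x).1 q = kk K κ 0 (d - 2 * q) (d - 2 * q) (x.1 q)) := by
  constructor
  · intro p hp
    by_cases h : n ≤ p ∧ p < m
    · rw [truncK_val K C D κ m n d x p h.1 h.2]
      apply Finset.sum_eq_zero
      intro r hr
      rw [Finset.mem_Icc] at hr
      rw [hx r (by omega), map_zero]
    · exact (truncK K C D κ m n d x).2 p (by omega)
  · intro h1 h2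
    rw [truncK_val K C D κ m n d x q h1 h2, Finset.sum_eq_single q]
    · simp
    · intro r hr hne
      rw [Finset.mem_Icc] at hr
      rw [hx r (by omega), map_zero]
    · intro h
      simp at h
      omega

lemma exists_single (m n d q : ℤ) (h1 : n ≤ q) (h2 : q < m) (c : C (d - 2 * q)) :
    ∃ x : truncSub K C m n d, (∀ p < q, x.1 p = 0) ∧ x.1 q = c := by
  refine ⟨⟨Pi.single q c, ?_⟩, ?_, ?_⟩
  · intro p hp
    exact Pi.single_eq_of_ne (by omega) _
  · intro p hp
    exact Pi.single_eq_of_ne (by omega) _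
  · exact Pi.single_eq_same _ _

lemma acyc_deg {S : S1Struct K C} {T : S1Struct K D} (κ : S1Map K C D S T)
    (h : AcycCone K C D (d0 K C S) (d0 K D T) (k0 K C D κ)) (a b c e : ℤ)
    (hb : b = a + 1) (hc : c = b + 1) (he : e = c + 1) (x : C c) (y : D b)
    (h1 : dd K S 0 c e x = 0) (h2 : kk K κ 0 c c x = dd K T 0 b c y) :
    ∃ (x' : C b) (y' : D a), dd K S 0 b c x' = x ∧ y = kk K κ 0 b b x' + dd K T 0 a b y' := by
  subst hb
  subst hc
  subst he
  exact h a x y h1 h2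

lemma trunc_acyc_aux {S : S1Struct K C} {T : S1Struct K D} (κ : S1Map K C D S T)
    (h : AcycCone K C D (d0 K C S) (d0 K D T) (k0 K C D κ)) (m n k : ℤ) (j : ℕ) :
    ∀ (q : ℤ) (_ : n ≤ q) (_ : m ≤ q + j)
      (x : truncSub K C m n (k + 1 + 1)) (y : truncSub K D m n (k + 1))
      (_ : ∀ p < q, x.1 p = 0) (_ : ∀ p < q, y.1 p = 0)
      (_ : truncD K C S m n (k + 1 + 1) x = 0)
      (_ : truncK K C D κ m n (k + 1 + 1) x = truncD K D T m n (k + 1) y),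
    ∃ (x' : truncSub K C m n (k + 1)) (y' : truncSub K D m n k),
      truncD K C S m n (k + 1) x' = x ∧
      y = truncK K C D κ m n (k + 1) x' + truncD K D T m n k y' := by
  induction j with
  | zero =>
    intro q hq hj x y hx hy h1 h2
    refine ⟨0, 0, ?_, ?_⟩
    · rw [map_zero]
      apply trunc_ext
      intro p hp hp'
      exact (hx p (by push_cast at hj; omega)).symm
    · rw [map_zero, map_zero, add_zero]
      apply trunc_ext
      intro p hp hp'
      exact (hy p (by push_cast at hj; omega))
  | succ j ih =>
    intro q hq hj x y hx hy h1 h2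
    by_cases hqm : q < m
    · have e1 := (truncD_low K C S m n _ x q hx).2 hq hqm
      have e2 := (truncD_low K D T m n _ y q hy).2 hq hqm
      have e3 := (truncK_low K C D κ m n _ x q hx).2 hq hqm
      obtain ⟨c, c', hc, hc'⟩ := acyc_deg K C D κ h (k - 2 * q) (k + 1 - 2 * q)
        (k + 1 + 1 - 2 * q) (k + 1 + 1 + 1 - 2 * q) (by ring) (by ring) (by ring)
        (x.1 q) (y.1 q) (by rw [← e1, h1]; rfl) (by rw [← e2, ← e3, h2])
      obtain ⟨X, hX, hXq⟩ := exists_single K C m n (k + 1) q hq hqm c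
      obtain ⟨Y, hY, hYq⟩ := exists_single K D m n k q hq hqm c'
      have f1 := truncD_low K C S m n _ X q hX
      have f2 := truncK_low K C D κ m n _ X q hX
      have f3 := truncD_low K D T m n _ Y q hY
      have a1 : ∀ p < q + 1, (x - truncD K C S m n (k + 1) X).1 p = 0 := by
        intro p hp
        show x.1 p - (truncD K C S m n (k + 1) X).1 p = 0
        rcases (show p < q ∨ p = q by omega) with hp | rfl
        · rw [hx p hp, f1.1 p hp, sub_zero]
        · rw [f1.2 hq hqm, hXq, hc, sub_self]
      have a2 : ∀ p < q + 1,
          (y - (truncK K C D κ m n (k + 1) X + truncD K D T m n k Y)).1 p = 0 := by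
        intro p hp
        show y.1 p - ((truncK K C D κ m n (k + 1) X).1 p + (truncD K D T m n k Y).1 p) = 0
        rcases (show p < q ∨ p = q by omega) with hp | rfl
        · rw [hy p hp, f2.1 p hp, f3.1 p hp, add_zero, sub_zero]
        · rw [f2.2 hq hqm, f3.2 hq hqm, hXq, hYq, ← hc', sub_self]
      obtain ⟨x', y', g1, g2⟩ := ih (q + 1) (by omega) (by push_cast at hj; omega)
        (x - truncD K C S m n (k + 1) X)
        (y - (truncK K C D κ m n (k + 1) X + truncD K D T m n k Y)) a1 a2
        (by rw [map_sub, h1, truncD_sq, sub_zero])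
        (by rw [map_sub, map_sub, map_add, truncD_sq, h2, truncK_chain, add_zero])
      refine ⟨x' + X, y' + Y, ?_, ?_⟩
      · rw [map_add, g1, sub_add_cancel]
      · rw [sub_eq_iff_eq_add] at g2
        rw [g2, map_add, map_add]
        abel
    · exact ih q hq (by omega) x y hx hy h1 h2

end Aux

theorem stmt11 (K : Type) [CommRing K]
    (C : ℤ → Type) [∀ n, AddCommGroup (C n)] [∀ n, Module K (C n)]
    (D : ℤ → Type) [∀ n, AddCommGroup (D n)] [∀ n, Module K (D n)]
    (S : S1Struct K C) (T : S1Struct K D) (κ : S1Map K C D S T)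
    (hqis : InducesIso K C D (d0 K C S) (d0 K D T) (k0 K C D κ))
    (m n : ℤ) (hmn : n ≤ m) :
    InducesIso K (fun d => ↥(truncSub K C m n d)) (fun d => ↥(truncSub K D m n d))
      (truncD K C S m n) (truncD K D T m n) (truncK K C D κ m n) := by
  have h := acyc_of_iso K C D _ _ _ (k0_chain K C D κ) hqis
  apply iso_of_acyc
  · intro d x
    exact truncK_chain K C D κ m n d x
  · intro k x y h1 h2
    exact trunc_acyc_aux K C D κ h m n k (m - n).toNat n le_rfl (by omega) x y
      (fun p hp => x.2 p (Or.inl hp)) (fun p hp => y.2 p (Or.inl hp)) h1 h2
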